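/- Under the hypotheses of the platoon prescribed-performance theorem (unicycle platoon of N vehicles with leader having bounded velocities v_0, ω_0, control laws v_i(t) = k_{d_i}·ε_{M̲_{d_i}, M̄_{d_i}}((d_i(t) − d_{i,des})/ρ_{d_i}(t)) and ω_i(t) = (k_{β_i}/ρ_{β_i}(t))·r_{β_con,β_con}(β_i(t)/ρ_{β_i}(t))·ε_{β_con,β_con}(β_i(t)/ρ_{β_i}(t)), and initial conditions d_col < d_i(0) < d_con, |β_i(0)| < β_con), there exist constants ξ̲_{d_i}, ξ̄_{d_i} with −M̲_{d_i} < ξ̲_{d_i} ≤ ξ̄_{d_i} < M̄_{d_i} and constants ξ̲_{β_i}, ξ̄_{β_i} with −β_con < ξ̲_{β_i} ≤ ξ̄_{β_i} < β_con such that for all t ≥ 0 and all i = 1, …, N: ξ̲_{d_i} ≤ (d_i(t) − d_{i,des})/ρ_{d_i}(t) ≤ ξ̄_{d_i} and ξ̲_{β_i} ≤ β_i(t)/ρ_{β_i}(t) ≤ ξ̄_{β_i}; consequently there exists a constant C > 0 such that |v_i(t)| ≤ C and |ω_i(t)| ≤ C for all t ≥ 0 and all i = 1, …, N. -/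

import Mathlib

/-- The transformed error ε_{a,b}(x) = log((1 + x/a)/(1 − x/b)). -/
noncomputable def epsErr (a b x : ℝ) : ℝ := Real.log ((1 + x / a) / (1 - x / b))

/-- The gain function r_{a,b}(x) = (1/a + 1/b)/((1 + x/a)(1 − x/b)). -/
noncomputable def gainFn (a b x : ℝ) : ℝ :=
  (1 / a + 1 / b) / ((1 + x / a) * (1 - x / b))

/-- The performance function ρ(t) = (1 − ρ_∞/M)e^{−l t} + ρ_∞/M. -/
noncomputable def perfFn (l ρ_inf M t : ℝ) : ℝ :=
  (1 - ρ_inf / M) * Real.exp (-l * t) + ρ_inf / M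

/-!
A normalized error cannot leave a compact box whose faces lie where its barrier feedback outweighs
both the bounded disturbance and the drift of the shrinking funnel: on each face the derivative
points inward. The distance thresholds are chosen first, since their disturbance is the velocity of
the predecessor and the feedback acts through `cos β ≥ cos β_con > 0`. The distance box then bounds
the follower's own speed and keeps `d` away from `0`, hence bounds the disturbance of the bearing,
and the bearing thresholds can be chosen. A bounded predecessor speed thus forces a bounded follower
speed, and the bound propagates along the platoon from the leader.
-/

open Set Filter Topology

section Invariance

variable {f : ℝ → ℝ} {f' t c : ℝ}

theorem eventually_le_of_hasDerivWithinAt_neg (hf : HasDerivWithinAt f f' (Ioi t) t)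
    (hle : f t ≤ c) (hneg : f t = c → f' < 0) : ∀ᶠ s in 𝓝[>] t, f s ≤ c := by
  rcases hle.lt_or_eq with hlt | heq
  · exact hf.continuousWithinAt.eventually_le_const hlt
  · filter_upwards [hf.limsup_slope_le' self_notMem_Ioi (hneg heq), self_mem_nhdsWithin]
      with s hslope hts
    rw [slope_def_field, div_lt_iff₀ (sub_pos.2 hts), zero_mul, heq] at hslope
    exact (sub_neg.1 hslope).le

theorem eventually_ge_of_hasDerivWithinAt_pos (hf : HasDerivWithinAt f f' (Ioi t) t)
    (hge : c ≤ f t) (hpos : f t = c → 0 < f') : ∀ᶠ s in 𝓝[>] t, c ≤ f s := by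
  have hneg := eventually_le_of_hasDerivWithinAt_neg hf.neg (neg_le_neg hge)
    fun h ↦ neg_neg_of_pos (hpos (neg_injective h))
  exact hneg.mono fun _ ↦ le_of_neg_le_neg

theorem forall_mem_Icc_of_deriv_inward {ι : Type*} [Finite ι] {ξ ξ' : ι → ℝ → ℝ}
    {lo hi : ι → ℝ} {a : ℝ}
    (hξ : ∀ j t, a ≤ t → HasDerivWithinAt (ξ j) (ξ' j t) (Ici a) t)
    (ha : ∀ j, ξ j a ∈ Icc (lo j) (hi j))
    (hinward : ∀ t, a ≤ t → (∀ k, ξ k t ∈ Icc (lo k) (hi k)) →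
      ∀ j, (ξ j t = lo j → 0 < ξ' j t) ∧ (ξ j t = hi j → ξ' j t < 0))
    (t : ℝ) (ht : a ≤ t) (j : ι) : ξ j t ∈ Icc (lo j) (hi j) := by
  let S : Set ℝ := {s | ∀ j, ξ j s ∈ Icc (lo j) (hi j)}
  have hclosed : IsClosed (S ∩ Icc a t) := by
    have hS : S ∩ Icc a t = Icc a t ∩ (fun s j ↦ ξ j s) ⁻¹' univ.pi fun j ↦ Icc (lo j) (hi j) := by
      ext s
      simp only [S, mem_inter_iff, mem_preimage, mem_univ_pi, mem_ofPred_eq, and_comm]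
    rw [hS]
    refine ContinuousOn.preimage_isClosed_of_isClosed ?_ isClosed_Icc
      (isClosed_set_pi fun _ _ ↦ isClosed_Icc)
    exact continuousOn_pi.2 fun j s hs ↦
      (hξ j s hs.1).continuousWithinAt.mono Icc_subset_Ici_self
  refine hclosed.Icc_subset_of_forall_mem_nhdsWithin ha ?_ ⟨ht, le_rfl⟩ j
  rintro s ⟨hsS, has, -⟩
  refine eventually_all.2 fun k ↦ ?_
  have hderiv := (hξ k s has).mono (Ioi_subset_Ici has)
  obtain ⟨hlo, hhi⟩ := hinward s has hsS k
  exact (eventually_ge_of_hasDerivWithinAt_pos hderiv (hsS k).1 hlo).and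
    (eventually_le_of_hasDerivWithinAt_neg hderiv (hsS k).2 hhi)

theorem forall_mem_Icc_pair_of_deriv_inward {ξ ξ' η η' : ℝ → ℝ} {lo hi lo' hi' a : ℝ}
    (hξ : ∀ t, a ≤ t → HasDerivWithinAt ξ (ξ' t) (Ici a) t)
    (hη : ∀ t, a ≤ t → HasDerivWithinAt η (η' t) (Ici a) t)
    (hξa : ξ a ∈ Icc lo hi) (hηa : η a ∈ Icc lo' hi')
    (hinward : ∀ t, a ≤ t → ξ t ∈ Icc lo hi → η t ∈ Icc lo' hi' →
      ((ξ t = lo → 0 < ξ' t) ∧ (ξ t = hi → ξ' t < 0)) ∧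
        ((η t = lo' → 0 < η' t) ∧ (η t = hi' → η' t < 0)))
    (t : ℝ) (ht : a ≤ t) : ξ t ∈ Icc lo hi ∧ η t ∈ Icc lo' hi' :=
  have hbox := forall_mem_Icc_of_deriv_inward (ξ := ![ξ, η]) (ξ' := ![ξ', η'])
    (lo := ![lo, lo']) (hi := ![hi, hi']) (Fin.forall_fin_two.2 ⟨hξ, hη⟩)
    (Fin.forall_fin_two.2 ⟨hξa, hηa⟩)
    (fun s hs hmem ↦ Fin.forall_fin_two.2 (hinward s hs (hmem 0) (hmem 1))) t ht
  ⟨hbox 0, hbox 1⟩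

end Invariance

/-- A feedback law that is continuous on `(a, b)` and pushes back without bound near both
endpoints. -/
structure IsBarrierFeedback (f : ℝ → ℝ) (a b : ℝ) : Prop where
  lt : a < b
  continuousOn : ContinuousOn f (Ioo a b)
  tendsto_atBot : Tendsto f (𝓝[>] a) atBot
  tendsto_atTop : Tendsto f (𝓝[<] b) atTop

/-- On `[0, ∞)` the signal `ξ` stays in a fixed compact subinterval of `(a, b)`. -/
def StaysInCompact (ξ : ℝ → ℝ) (a b : ℝ) : Prop :=
  ∃ lo hi, (a < lo ∧ lo ≤ hi ∧ hi < b) ∧ ∀ t, 0 ≤ t → lo ≤ ξ t ∧ ξ t ≤ hi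

section BarrierFeedback

variable {f g ξ : ℝ → ℝ} {a b c x : ℝ}

theorem StaysInCompact.exists_abs_comp_le (hξ : StaysInCompact ξ a b)
    (hf : ContinuousOn f (Ioo a b)) : ∃ C, ∀ t, 0 ≤ t → |f (ξ t)| ≤ C := by
  obtain ⟨lo, hi, ⟨hlo, -, hhi⟩, hmem⟩ := hξ
  obtain ⟨C, hC⟩ := isCompact_Icc.exists_bound_of_continuousOn (hf.mono (Icc_subset_Ioo hlo hhi))
  exact ⟨C, fun t ht ↦ hC _ (hmem t ht)⟩

namespace IsBarrierFeedback

theorem exists_thresholds (hf : IsBarrierFeedback f a b) (hx : x ∈ Ioo a b) (L : ℝ) :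
    ∃ lo ∈ Ioo a x, ∃ hi ∈ Ioo x b, f lo ≤ -L ∧ L ≤ f hi := by
  obtain ⟨lo, hflo, hlo⟩ :=
    ((hf.tendsto_atBot.eventually_le_atBot (-L)).and (Ioo_mem_nhdsGT hx.1)).exists
  obtain ⟨hi, hfhi, hhi⟩ :=
    ((hf.tendsto_atTop.eventually_ge_atTop L).and (Ioo_mem_nhdsLT hx.2)).exists
  exact ⟨lo, hlo, hi, hhi, hflo, hfhi⟩

theorem mul_left (hf : IsBarrierFeedback f a b) (hg : ContinuousOn g (Ioo a b)) (hc : 0 < c)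
    (hcg : ∀ x ∈ Ioo a b, c ≤ g x) : IsBarrierFeedback (fun x ↦ g x * f x) a b where
  lt := hf.lt
  continuousOn := hg.mul hf.continuousOn
  tendsto_atBot := by
    refine tendsto_atBot_mono' _ ?_ (hf.tendsto_atBot.const_mul_atBot hc)
    filter_upwards [Ioo_mem_nhdsGT hf.lt, hf.tendsto_atBot.eventually_le_atBot 0] with x hx hfx
    exact mul_le_mul_of_nonpos_right (hcg x hx) hfx
  tendsto_atTop := by
    refine tendsto_atTop_mono' _ ?_ (hf.tendsto_atTop.const_mul_atTop hc)
    filter_upwards [Ioo_mem_nhdsLT hf.lt, hf.tendsto_atTop.eventually_ge_atTop 0] with x hx hfx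
    exact mul_le_mul_of_nonneg_right (hcg x hx) hfx

theorem const_mul (hf : IsBarrierFeedback f a b) (hc : 0 < c) :
    IsBarrierFeedback (fun x ↦ c * f x) a b :=
  hf.mul_left continuousOn_const hc fun _ _ ↦ le_rfl

end IsBarrierFeedback

end BarrierFeedback

section TransformedError

variable {a b x : ℝ}

theorem one_add_div_pos (ha : 0 < a) (hx : -a < x) : 0 < 1 + x / a := by
  rw [one_add_div ha.ne']
  exact div_pos (by linarith) ha

theorem one_sub_div_pos (hb : 0 < b) (hx : x < b) : 0 < 1 - x / b :=
  sub_pos.2 ((div_lt_one hb).2 hx)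

theorem epsErr_neg (a b x : ℝ) : epsErr a b (-x) = -epsErr b a x := by
  rw [epsErr, epsErr, ← Real.log_inv, inv_div, neg_div, neg_div, sub_neg_eq_add, ← sub_eq_add_neg]

theorem continuousOn_epsErr (ha : 0 < a) (hb : 0 < b) :
    ContinuousOn (epsErr a b) (Ioo (-a) b) := by
  unfold epsErr
  refine ContinuousOn.log (ContinuousOn.div (by fun_prop) (by fun_prop) fun x hx ↦ ?_) fun x hx ↦ ?_
  · exact (one_sub_div_pos hb hx.2).ne'
  · exact (div_pos (one_add_div_pos ha hx.1) (one_sub_div_pos hb hx.2)).ne'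

theorem tendsto_epsErr_atTop (ha : 0 < a) (hb : 0 < b) :
    Tendsto (epsErr a b) (𝓝[<] b) atTop := by
  have hnum : Tendsto (fun x ↦ 1 + x / a) (𝓝[<] b) (𝓝 (1 + b / a)) :=
    (Continuous.tendsto (by fun_prop) b).mono_left nhdsWithin_le_nhds
  have hden : Tendsto (fun x ↦ 1 - x / b) (𝓝[<] b) (𝓝[>] 0) := by
    refine tendsto_nhdsWithin_iff.2
      ⟨?_, eventually_mem_nhdsWithin.mono fun x hx ↦ one_sub_div_pos hb hx⟩
    have hlim : Tendsto (fun x ↦ 1 - x / b) (𝓝 b) (𝓝 (1 - b / b)) :=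
      Continuous.tendsto (by fun_prop) b
    rw [div_self hb.ne', sub_self] at hlim
    exact hlim.mono_left nhdsWithin_le_nhds
  exact Real.tendsto_log_atTop.comp
    (hnum.pos_mul_atTop (by positivity) hden.inv_tendsto_nhdsGT_zero)

theorem tendsto_epsErr_atBot (ha : 0 < a) (hb : 0 < b) :
    Tendsto (epsErr a b) (𝓝[>] (-a)) atBot := by
  have h := tendsto_neg_atTop_atBot.comp
    ((tendsto_epsErr_atTop hb ha).comp tendsto_neg_nhdsGT_neg)
  exact h.congr fun x ↦ by simp [← epsErr_neg]

theorem isBarrierFeedback_epsErr (ha : 0 < a) (hb : 0 < b) :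
    IsBarrierFeedback (epsErr a b) (-a) b where
  lt := by linarith
  continuousOn := continuousOn_epsErr ha hb
  tendsto_atBot := tendsto_epsErr_atBot ha hb
  tendsto_atTop := tendsto_epsErr_atTop ha hb

theorem continuousOn_gainFn (ha : 0 < a) (hb : 0 < b) :
    ContinuousOn (gainFn a b) (Ioo (-a) b) := by
  unfold gainFn
  refine ContinuousOn.div (by fun_prop) (by fun_prop) fun x hx ↦ ?_
  exact (mul_pos (one_add_div_pos ha hx.1) (one_sub_div_pos hb hx.2)).ne'

theorem four_div_add_le_gainFn (ha : 0 < a) (hb : 0 < b) (hx : x ∈ Ioo (-a) b) :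
    4 / (a + b) ≤ gainFn a b x := by
  have hpos := mul_pos (one_add_div_pos ha hx.1) (one_sub_div_pos hb hx.2)
  rw [gainFn, div_le_div_iff₀ (by positivity) hpos, ← sub_nonneg]
  have hsq : (1 / a + 1 / b) * (a + b) - 4 * ((1 + x / a) * (1 - x / b)) =
      ((a + x) - (b - x)) ^ 2 / (a * b) := by
    field_simp
    ring
  rw [hsq]
  positivity

theorem isBarrierFeedback_gainFn_mul_epsErr (ha : 0 < a) (hb : 0 < b) :
    IsBarrierFeedback (fun x ↦ gainFn a b x * epsErr a b x) (-a) b :=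
  (isBarrierFeedback_epsErr ha hb).mul_left (continuousOn_gainFn ha hb)
    (by positivity) fun _ ↦ four_div_add_le_gainFn ha hb

end TransformedError

/-- A performance function on `[0, ∞)`: it starts at `1`, takes values in `[m, 1]` with `0 < m`,
and varies at rate at most `l`. -/
structure IsPerformanceFn (ρ : ℝ → ℝ) (m l : ℝ) : Prop where
  differentiable : Differentiable ℝ ρ
  zero : ρ 0 = 1
  lower_pos : 0 < m
  lower_le : ∀ t, 0 ≤ t → m ≤ ρ t
  le_one : ∀ t, 0 ≤ t → ρ t ≤ 1
  abs_deriv_le : ∀ t, 0 ≤ t → |deriv ρ t| ≤ l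

theorem hasDerivAt_perfFn (l r M t : ℝ) :
    HasDerivAt (perfFn l r M) (-(l * (perfFn l r M t - r / M))) t := by
  have h := (((hasDerivAt_id t).const_mul (-l)).exp.const_mul (1 - r / M)).add_const (r / M)
  convert! h using 1
  simp only [perfFn, id_eq]
  ring

theorem div_le_perfFn {r M : ℝ} (hM : 0 < M) (hrM : r ≤ M) (l t : ℝ) :
    r / M ≤ perfFn l r M t :=
  le_add_of_nonneg_left <|
    mul_nonneg (sub_nonneg.2 ((div_le_one hM).2 hrM)) (Real.exp_pos _).le

theorem perfFn_le_one {l r M t : ℝ} (hl : 0 ≤ l) (hM : 0 < M) (hrM : r ≤ M) (ht : 0 ≤ t) :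
    perfFn l r M t ≤ 1 := by
  have hexp : Real.exp (-l * t) ≤ 1 :=
    Real.exp_le_one_iff.2 (mul_nonpos_of_nonpos_of_nonneg (neg_nonpos.2 hl) ht)
  have hcoef : 0 ≤ 1 - r / M := sub_nonneg.2 ((div_le_one hM).2 hrM)
  rw [perfFn]
  linarith [mul_le_of_le_one_right hcoef hexp]

theorem isPerformanceFn_perfFn {l r M : ℝ} (hl : 0 ≤ l) (hr : 0 < r) (hrM : r ≤ M) :
    IsPerformanceFn (perfFn l r M) (r / M) l where
  differentiable t := (hasDerivAt_perfFn l r M t).differentiableAt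
  zero := by simp [perfFn]
  lower_pos := div_pos hr (hr.trans_le hrM)
  lower_le t _ := div_le_perfFn (hr.trans_le hrM) hrM l t
  le_one _ := perfFn_le_one hl (hr.trans_le hrM) hrM
  abs_deriv_le t ht := by
    have hM := hr.trans_le hrM
    have hlower := div_le_perfFn hM hrM l t
    have hrate : perfFn l r M t - r / M ≤ 1 := by
      linarith [perfFn_le_one hl hM hrM ht, div_pos hr hM]
    rw [(hasDerivAt_perfFn l r M t).deriv, abs_neg, abs_of_nonneg (mul_nonneg hl (by linarith))]
    exact mul_le_of_le_one_right hl hrate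

namespace IsPerformanceFn

variable {ρ e : ℝ → ℝ} {m l t e' z B : ℝ} {s : Set ℝ}

theorem pos (hρ : IsPerformanceFn ρ m l) (ht : 0 ≤ t) : 0 < ρ t :=
  hρ.lower_pos.trans_le (hρ.lower_le t ht)

theorem hasDerivWithinAt_div (hρ : IsPerformanceFn ρ m l) (ht : 0 ≤ t)
    (he : HasDerivWithinAt e e' s t) :
    HasDerivWithinAt (fun t ↦ e t / ρ t) ((e' - e t / ρ t * deriv ρ t) / ρ t) s t := by
  have hne := (hρ.pos ht).ne'
  convert! he.div (hρ.differentiable t).hasDerivAt.hasDerivWithinAt hne using 1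
  field_simp

theorem abs_mul_deriv_le (hρ : IsPerformanceFn ρ m l) (ht : 0 ≤ t) (hz : |z| ≤ B) :
    |z * deriv ρ t| ≤ B * l := by
  rw [abs_mul]
  exact mul_le_mul hz (hρ.abs_deriv_le t ht) (abs_nonneg _) ((abs_nonneg z).trans hz)

theorem neg_le_of_neg_le_div (hρ : IsPerformanceFn ρ m l) (ht : 0 ≤ t) (hB : 0 ≤ B)
    (hz : -B ≤ z / ρ t) : -B ≤ z := by
  rw [le_div_iff₀ (hρ.pos ht)] at hz
  linarith [mul_le_of_le_one_right hB (hρ.le_one t ht)]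

theorem abs_le_of_abs_div_le (hρ : IsPerformanceFn ρ m l) (ht : 0 ≤ t) (hz : |z / ρ t| ≤ B) :
    |z| ≤ B := by
  have hB : 0 ≤ B := (abs_nonneg _).trans hz
  rw [abs_div, abs_of_pos (hρ.pos ht), div_le_iff₀ (hρ.pos ht)] at hz
  exact hz.trans (mul_le_of_le_one_right hB (hρ.le_one t ht))

end IsPerformanceFn

theorem polar_deriv {X Y d θ : ℝ → ℝ} {X' Y' d' θ' t : ℝ} {s : Set ℝ}
    (hs : UniqueDiffWithinAt ℝ s t) (ht : t ∈ s)
    (hX : HasDerivWithinAt X X' s t) (hY : HasDerivWithinAt Y Y' s t)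
    (hd : HasDerivWithinAt d d' s t) (hθ : HasDerivWithinAt θ θ' s t)
    (hcos : ∀ τ ∈ s, X τ = d τ * Real.cos (θ τ)) (hsin : ∀ τ ∈ s, Y τ = d τ * Real.sin (θ τ)) :
    d' = X' * Real.cos (θ t) + Y' * Real.sin (θ t) ∧
      d t * θ' = Y' * Real.cos (θ t) - X' * Real.sin (θ t) := by
  have hX' := hs.eq_deriv _ hX ((hd.mul hθ.cos).congr hcos (hcos t ht))
  have hY' := hs.eq_deriv _ hY ((hd.mul hθ.sin).congr hsin (hsin t ht))
  have hunit := Real.sin_sq_add_cos_sq (θ t)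
  constructor
  · linear_combination -Real.cos (θ t) * hX' - Real.sin (θ t) * hY' - d' * hunit
  · linear_combination Real.sin (θ t) * hX' - Real.cos (θ t) * hY' - d t * θ' * hunit

/-- The motion on `[0, ∞)` of a target seen by a unicycle with inputs `v`, `ω`: `d` and `β` are
the distance and bearing of the target, `u` and `w` the components of its velocity along and across
the line of sight. -/
structure IsRelativeMotion (d β v ω u w : ℝ → ℝ) : Prop where
  pos : ∀ t, 0 ≤ t → 0 < d t
  hasDeriv_distance : ∀ t, 0 ≤ t →
    HasDerivWithinAt d (u t - Real.cos (β t) * v t) (Ici 0) t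
  hasDeriv_bearing : ∀ t, 0 ≤ t →
    HasDerivWithinAt β ((w t + v t * Real.sin (β t)) / d t - ω t) (Ici 0) t

theorem isRelativeMotion_of_unicycle {x₀ y₀ φ₀ v₀ x y φ v ω d β : ℝ → ℝ}
    (hx₀ : ∀ t, 0 ≤ t → HasDerivWithinAt x₀ (v₀ t * Real.cos (φ₀ t)) (Ici 0) t)
    (hy₀ : ∀ t, 0 ≤ t → HasDerivWithinAt y₀ (v₀ t * Real.sin (φ₀ t)) (Ici 0) t)
    (hx : ∀ t, 0 ≤ t → HasDerivWithinAt x (v t * Real.cos (φ t)) (Ici 0) t)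
    (hy : ∀ t, 0 ≤ t → HasDerivWithinAt y (v t * Real.sin (φ t)) (Ici 0) t)
    (hφ : ∀ t, 0 ≤ t → HasDerivWithinAt φ (ω t) (Ici 0) t)
    (hdiff : ∀ t, 0 ≤ t →
      DifferentiableWithinAt ℝ d (Ici 0) t ∧ DifferentiableWithinAt ℝ β (Ici 0) t)
    (hdpos : ∀ t, 0 ≤ t → 0 < d t)
    (hgx : ∀ t, 0 ≤ t → x₀ t - x t = d t * Real.cos (φ t + β t))
    (hgy : ∀ t, 0 ≤ t → y₀ t - y t = d t * Real.sin (φ t + β t)) :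
    IsRelativeMotion d β v ω (fun t ↦ v₀ t * Real.cos (φ₀ t - (φ t + β t)))
      (fun t ↦ v₀ t * Real.sin (φ₀ t - (φ t + β t))) := by
  have hpolar (t : ℝ) (ht : 0 ≤ t) := polar_deriv (uniqueDiffOn_Ici 0 t ht) ht
    ((hx₀ t ht).sub (hx t ht)) ((hy₀ t ht).sub (hy t ht)) (hdiff t ht).1.hasDerivWithinAt
    ((hφ t ht).add (hdiff t ht).2.hasDerivWithinAt) hgx hgy
  refine ⟨hdpos, fun t ht ↦ ?_, fun t ht ↦ ?_⟩
  · refine (hdiff t ht).1.hasDerivWithinAt.congr_deriv ((hpolar t ht).1.trans ?_)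
    have hcos : Real.cos (β t) = Real.cos (φ t + β t) * Real.cos (φ t) +
        Real.sin (φ t + β t) * Real.sin (φ t) := by
      rw [← Real.cos_sub, add_sub_cancel_left]
    rw [hcos, Real.cos_sub, Pi.add_apply]
    ring
  · refine (hdiff t ht).2.hasDerivWithinAt.congr_deriv ?_
    have hsin : Real.sin (β t) = Real.sin (φ t + β t) * Real.cos (φ t) -
        Real.cos (φ t + β t) * Real.sin (φ t) := by
      rw [← Real.sin_sub, add_sub_cancel_left]
    rw [eq_sub_iff_add_eq', eq_div_iff (hdpos t ht).ne', mul_comm, (hpolar t ht).2, hsin,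
      Real.sin_sub, Pi.add_apply]
    ring

section FunnelControl

variable {f g ρ σ d β v ω u w : ℝ → ℝ} {a b c m m' l l' C D : ℝ}

theorem IsBarrierFeedback.exists_inward_thresholds {x κ₀ : ℝ} (hf : IsBarrierFeedback f a b)
    (hρ : IsPerformanceFn ρ m l) (hx : x ∈ Ioo a b) (hκ₀ : 0 < κ₀) (W : ℝ) :
    ∃ lo ∈ Ioo a x, ∃ hi ∈ Ioo x b, ∀ t e κ z, 0 ≤ t → |e| ≤ W → κ₀ ≤ κ →
      (z = lo → 0 < (e - κ * f z - z * deriv ρ t) / ρ t) ∧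
        (z = hi → (e - κ * f z - z * deriv ρ t) / ρ t < 0) := by
  obtain ⟨lo, hlo, hi, hhi, hflo, hfhi⟩ :=
    hf.exists_thresholds hx ((W + max |a| |b| * l + 1) / κ₀)
  refine ⟨lo, hlo, hi, hhi, fun t e κ z ht he hκ ↦ ?_⟩
  have hl : 0 ≤ l := (abs_nonneg _).trans (hρ.abs_deriv_le t ht)
  have hW : 0 ≤ W := (abs_nonneg e).trans he
  have hfeedback {y : ℝ} (hy : (W + max |a| |b| * l + 1) / κ₀ ≤ y) :
      W + max |a| |b| * l + 1 ≤ κ * y := by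
    rw [div_le_iff₀' hκ₀] at hy
    have hy₀ : 0 ≤ y := nonneg_of_mul_nonneg_right (le_trans (by positivity) hy) hκ₀
    exact hy.trans (mul_le_mul_of_nonneg_right hκ hy₀)
  have hdrift {z : ℝ} (haz : a < z) (hzb : z < b) := abs_le.1
    (hρ.abs_mul_deriv_le ht (abs_le_max_abs_abs haz.le hzb.le))
  obtain ⟨he_lo, he_hi⟩ := abs_le.1 he
  constructor
  · rintro rfl
    have hpush := hfeedback (le_neg_of_le_neg hflo)
    exact div_pos (by linarith [(hdrift hlo.1 (hlo.2.trans hx.2)).2]) (hρ.pos ht)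
  · rintro rfl
    have hpush := hfeedback hfhi
    exact div_neg_of_neg_of_pos (by linarith [(hdrift (hx.1.trans hhi.1) hhi.2).1]) (hρ.pos ht)

theorem abs_mul_le_of_abs_le_one {p q : ℝ} (hp : |p| ≤ C) (hq : |q| ≤ 1) : |p * q| ≤ C := by
  rw [abs_mul]
  exact (mul_le_of_le_one_right (abs_nonneg p) hq).trans hp

theorem cos_le_cos_of_abs_le {θ : ℝ} (hθ : |θ| ≤ c) (hc : c ≤ Real.pi) :
    Real.cos c ≤ Real.cos θ := by
  rw [← Real.cos_abs θ]
  exact Real.cos_le_cos_of_nonneg_of_le_pi (abs_nonneg θ) hc hθ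

theorem IsRelativeMotion.abs_bearing_rate_le {V δ t : ℝ} (h : IsRelativeMotion d β v ω u w)
    (ht : 0 ≤ t) (hw : |w t| ≤ C) (hv : |v t| ≤ V) (hδ : 0 < δ) (hd : δ ≤ d t) :
    |(w t + v t * Real.sin (β t)) / d t| ≤ (C + V) / δ := by
  have hnum : |w t + v t * Real.sin (β t)| ≤ C + V :=
    (abs_add_le _ _).trans (add_le_add hw (abs_mul_le_of_abs_le_one hv (Real.abs_sin_le_one _)))
  rw [abs_div, abs_of_pos (h.pos t ht)]
  exact div_le_div₀ ((abs_nonneg _).trans hnum) hnum hδ hd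

theorem IsRelativeMotion.staysInCompact (h : IsRelativeMotion d β v ω u w)
    (hρ : IsPerformanceFn ρ m l) (hσ : IsPerformanceFn σ m' l')
    (hf : IsBarrierFeedback f (-a) b) (hg : IsBarrierFeedback g (-c) c)
    (ha : 0 ≤ a) (haD : a < D) (hc : c < Real.pi / 2)
    (hu : ∀ t, 0 ≤ t → |u t| ≤ C) (hw : ∀ t, 0 ≤ t → |w t| ≤ C)
    (hv : ∀ t, 0 ≤ t → v t = f ((d t - D) / ρ t))
    (hω : ∀ t, 0 ≤ t → ω t = (σ t)⁻¹ * g (β t / σ t))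
    (hd₀ : d 0 - D ∈ Ioo (-a) b) (hβ₀ : β 0 ∈ Ioo (-c) c) :
    StaysInCompact (fun t ↦ (d t - D) / ρ t) (-a) b ∧
      StaysInCompact (fun t ↦ β t / σ t) (-c) c := by
  have hcos : 0 < Real.cos c := Real.cos_pos_of_mem_Ioo ⟨by linarith [hg.lt], hc⟩
  obtain ⟨lo, hlo, hi, hhi, hdist⟩ := hf.exists_inward_thresholds hρ hd₀ hcos C
  obtain ⟨V, hV⟩ := isCompact_Icc.exists_bound_of_continuousOn
    (hf.continuousOn.mono (Icc_subset_Ioo hlo.1 hhi.2))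
  obtain ⟨lo', hlo', hi', hhi', hbear⟩ :=
    hg.exists_inward_thresholds hσ hβ₀ one_pos ((C + V) / (D - a))
  have hbox := forall_mem_Icc_pair_of_deriv_inward
    (fun t ht ↦ hρ.hasDerivWithinAt_div ht ((h.hasDeriv_distance t ht).sub_const D))
    (fun t ht ↦ hσ.hasDerivWithinAt_div ht (h.hasDeriv_bearing t ht))
    (by simpa only [hρ.zero, div_one] using ⟨hlo.2.le, hhi.1.le⟩)
    (by simpa only [hσ.zero, div_one] using ⟨hlo'.2.le, hhi'.1.le⟩) ?_
  · exact ⟨⟨lo, hi, ⟨hlo.1, (hlo.2.trans hhi.1).le, hhi.2⟩, fun t ht ↦ (hbox t ht).1⟩,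
      ⟨lo', hi', ⟨hlo'.1, (hlo'.2.trans hhi'.1).le, hhi'.2⟩, fun t ht ↦ (hbox t ht).2⟩⟩
  · intro t ht hξ hη
    have hβ : |β t| ≤ c := hσ.abs_le_of_abs_div_le ht
      (abs_le.2 ⟨hlo'.1.le.trans hη.1, hη.2.trans hhi'.2.le⟩)
    have hd : D - a ≤ d t := by
      linarith [hρ.neg_le_of_neg_le_div ht ha (hlo.1.le.trans hξ.1)]
    have hvV : |v t| ≤ V := hv t ht ▸ hV _ hξ
    have hcosβ : Real.cos c ≤ Real.cos (β t) := cos_le_cos_of_abs_le hβ (by linarith [Real.pi_pos])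
    have hσinv : 1 ≤ (σ t)⁻¹ := (one_le_inv₀ (hσ.pos ht)).2 (hσ.le_one t ht)
    have hrate := h.abs_bearing_rate_le ht (hw t ht) hvV (sub_pos.2 haD) hd
    refine ⟨?_, ?_⟩
    · rw [hv t ht]
      exact hdist t _ _ _ ht (hu t ht) hcosβ
    · rw [hω t ht]
      exact hbear t _ _ _ ht hrate hσinv

theorem StaysInCompact.exists_input_bound
    (hξ : StaysInCompact (fun t ↦ (d t - D) / ρ t) a b)
    (hη : StaysInCompact (fun t ↦ β t / σ t) (-c) c)
    (hσ : IsPerformanceFn σ m l) (hf : ContinuousOn f (Ioo a b))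
    (hg : ContinuousOn g (Ioo (-c) c))
    (hv : ∀ t, 0 ≤ t → v t = f ((d t - D) / ρ t))
    (hω : ∀ t, 0 ≤ t → ω t = (σ t)⁻¹ * g (β t / σ t)) :
    ∃ C, ∀ t, 0 ≤ t → |v t| ≤ C ∧ |ω t| ≤ C := by
  obtain ⟨F, hF⟩ := hξ.exists_abs_comp_le hf
  obtain ⟨G, hG⟩ := hη.exists_abs_comp_le hg
  refine ⟨max F (m⁻¹ * G), fun t ht ↦ ⟨le_max_of_le_left ?_, le_max_of_le_right ?_⟩⟩
  · rw [hv t ht]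
    exact hF t ht
  · rw [hω t ht, abs_mul, abs_of_pos (inv_pos.2 (hσ.pos ht))]
    exact mul_le_mul (inv_anti₀ hσ.lower_pos (hσ.lower_le t ht)) (hG t ht) (abs_nonneg _)
      (inv_pos.2 hσ.lower_pos).le

theorem IsRelativeMotion.prescribed_performance {ρd_inf ρβ_inf l_d l_β k_d k_β d_col d_con : ℝ}
    (h : IsRelativeMotion d β v ω u w)
    (hd_col : 0 < d_col) (hD : d_col < D ∧ D < d_con) (hc : c < Real.pi / 2)
    (hl_d : 0 ≤ l_d) (hl_β : 0 ≤ l_β)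
    (hρd : 0 < ρd_inf) (hρd' : ρd_inf ≤ max (D - d_col) (d_con - D))
    (hρβ : 0 < ρβ_inf) (hρβ' : ρβ_inf ≤ c) (hk_d : 0 < k_d) (hk_β : 0 < k_β)
    (hu : ∀ t, 0 ≤ t → |u t| ≤ C) (hw : ∀ t, 0 ≤ t → |w t| ≤ C)
    (hv : ∀ t, 0 ≤ t → v t = k_d * epsErr (D - d_col) (d_con - D)
      ((d t - D) / perfFn l_d ρd_inf (max (D - d_col) (d_con - D)) t))
    (hω : ∀ t, 0 ≤ t → ω t = k_β / perfFn l_β ρβ_inf c t *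
      gainFn c c (β t / perfFn l_β ρβ_inf c t) * epsErr c c (β t / perfFn l_β ρβ_inf c t))
    (hd₀ : d_col < d 0 ∧ d 0 < d_con) (hβ₀ : |β 0| < c) :
    StaysInCompact (fun t ↦ (d t - D) / perfFn l_d ρd_inf (max (D - d_col) (d_con - D)) t)
        (-(D - d_col)) (d_con - D) ∧
      StaysInCompact (fun t ↦ β t / perfFn l_β ρβ_inf c t) (-c) c ∧
      ∃ C, ∀ t, 0 ≤ t → |v t| ≤ C ∧ |ω t| ≤ C := by
  have hc₀ : 0 < c := hρβ.trans_le hρβ'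
  have hσ := isPerformanceFn_perfFn hl_β hρβ hρβ'
  have hf := (isBarrierFeedback_epsErr (sub_pos.2 hD.1) (sub_pos.2 hD.2)).const_mul hk_d
  have hg := (isBarrierFeedback_gainFn_mul_epsErr hc₀ hc₀).const_mul hk_β
  have hω' (t : ℝ) (ht : 0 ≤ t) := (hω t ht).trans <|
    show _ = (perfFn l_β ρβ_inf c t)⁻¹ * (k_β * (gainFn c c (β t / perfFn l_β ρβ_inf c t) *
      epsErr c c (β t / perfFn l_β ρβ_inf c t))) by ring
  obtain ⟨hξ, hη⟩ := h.staysInCompact (isPerformanceFn_perfFn hl_d hρd hρd') hσ hf hg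
    (sub_pos.2 hD.1).le (sub_lt_self D hd_col) hc hu hw hv hω'
    ⟨by linarith [hd₀.1], by linarith [hd₀.2]⟩ (abs_lt.1 hβ₀)
  exact ⟨hξ, hη, hξ.exists_input_bound hη hσ hf.continuousOn hg.continuousOn hv hω'⟩

end FunnelControl

theorem platoon_normalized_errors_compact_and_bounded_inputs_general
    {N : ℕ}
    {d_col d_con β_con ρd_inf ρβ_inf l_d l_β : ℝ}
    {d_des k_d k_β : ℕ → ℝ}
    (hd_col : 0 < d_col)
    (hd_des : ∀ i, 1 ≤ i → i ≤ N → d_col < d_des i ∧ d_des i < d_con)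
    (hβ_con' : β_con < Real.pi / 2)
    (hl_d : 0 ≤ l_d) (hl_β : 0 ≤ l_β)
    (hρd : 0 < ρd_inf)
    (hρd' : ∀ i, 1 ≤ i → i ≤ N → ρd_inf ≤ max (d_des i - d_col) (d_con - d_des i))
    (hρβ : 0 < ρβ_inf) (hρβ' : ρβ_inf ≤ β_con)
    (hk_d : ∀ i, 1 ≤ i → i ≤ N → 0 < k_d i)
    (hk_β : ∀ i, 1 ≤ i → i ≤ N → 0 < k_β i)
    {x y φ v ω d β : ℕ → ℝ → ℝ}
    (hx : ∀ i, i ≤ N → ∀ t : ℝ, 0 ≤ t →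
      HasDerivWithinAt (x i) (v i t * Real.cos (φ i t)) (Set.Ici (0 : ℝ)) t)
    (hy : ∀ i, i ≤ N → ∀ t : ℝ, 0 ≤ t →
      HasDerivWithinAt (y i) (v i t * Real.sin (φ i t)) (Set.Ici (0 : ℝ)) t)
    (hφ : ∀ i, 1 ≤ i → i ≤ N → ∀ t : ℝ, 0 ≤ t →
      HasDerivWithinAt (φ i) (ω i t) (Set.Ici (0 : ℝ)) t)
    (hlead : ∃ C : ℝ, ∀ t : ℝ, 0 ≤ t → |v 0 t| ≤ C)
    (hdiff : ∀ i, 1 ≤ i → i ≤ N → ∀ t : ℝ, 0 ≤ t →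
      DifferentiableWithinAt ℝ (d i) (Set.Ici (0 : ℝ)) t ∧
      DifferentiableWithinAt ℝ (β i) (Set.Ici (0 : ℝ)) t)
    (hdpos : ∀ i, 1 ≤ i → i ≤ N → ∀ t : ℝ, 0 ≤ t → 0 < d i t)
    (hgx : ∀ i, 1 ≤ i → i ≤ N → ∀ t : ℝ, 0 ≤ t →
      x (i - 1) t - x i t = d i t * Real.cos (φ i t + β i t))
    (hgy : ∀ i, 1 ≤ i → i ≤ N → ∀ t : ℝ, 0 ≤ t →
      y (i - 1) t - y i t = d i t * Real.sin (φ i t + β i t))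
    (hv : ∀ i, 1 ≤ i → i ≤ N → ∀ t : ℝ, 0 ≤ t →
      v i t = k_d i * epsErr (d_des i - d_col) (d_con - d_des i)
        ((d i t - d_des i) /
          perfFn l_d ρd_inf (max (d_des i - d_col) (d_con - d_des i)) t))
    (hω : ∀ i, 1 ≤ i → i ≤ N → ∀ t : ℝ, 0 ≤ t →
      ω i t = (k_β i / perfFn l_β ρβ_inf β_con t) *
        gainFn β_con β_con (β i t / perfFn l_β ρβ_inf β_con t) *
        epsErr β_con β_con (β i t / perfFn l_β ρβ_inf β_con t))
    (hinit : ∀ i, 1 ≤ i → i ≤ N →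
      (d_col < d i 0 ∧ d i 0 < d_con) ∧ |β i 0| < β_con) :
    ∃ ξd_lo ξd_hi ξβ_lo ξβ_hi : ℕ → ℝ,
      (∀ i, 1 ≤ i → i ≤ N →
        (-(d_des i - d_col) < ξd_lo i ∧ ξd_lo i ≤ ξd_hi i ∧
          ξd_hi i < d_con - d_des i) ∧
        (-β_con < ξβ_lo i ∧ ξβ_lo i ≤ ξβ_hi i ∧ ξβ_hi i < β_con) ∧
        (∀ t : ℝ, 0 ≤ t →
          (ξd_lo i ≤ (d i t - d_des i) /
              perfFn l_d ρd_inf (max (d_des i - d_col) (d_con - d_des i)) t ∧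
            (d i t - d_des i) /
              perfFn l_d ρd_inf (max (d_des i - d_col) (d_con - d_des i)) t ≤
              ξd_hi i) ∧
          (ξβ_lo i ≤ β i t / perfFn l_β ρβ_inf β_con t ∧
            β i t / perfFn l_β ρβ_inf β_con t ≤ ξβ_hi i))) ∧
      ∃ C : ℝ, 0 < C ∧ ∀ i, 1 ≤ i → i ≤ N → ∀ t : ℝ, 0 ≤ t →
        |v i t| ≤ C ∧ |ω i t| ≤ C := by
  have follower {i : ℕ} (hi : 1 ≤ i) (hiN : i ≤ N) {C : ℝ}
      (hpred : ∀ t, 0 ≤ t → |v (i - 1) t| ≤ C) :=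
    (isRelativeMotion_of_unicycle (hx (i - 1) (by lia))
      (hy (i - 1) (by lia)) (hx i hiN) (hy i hiN) (hφ i hi hiN) (hdiff i hi hiN) (hdpos i hi hiN)
      (hgx i hi hiN) (hgy i hi hiN)).prescribed_performance hd_col (hd_des i hi hiN) hβ_con'
        hl_d hl_β hρd (hρd' i hi hiN) hρβ hρβ' (hk_d i hi hiN) (hk_β i hi hiN)
        (fun t ht ↦ abs_mul_le_of_abs_le_one (hpred t ht) (Real.abs_cos_le_one _))
        (fun t ht ↦ abs_mul_le_of_abs_le_one (hpred t ht) (Real.abs_sin_le_one _))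
        (hv i hi hiN) (hω i hi hiN) (hinit i hi hiN).1 (hinit i hi hiN).2
  have speed (i : ℕ) : i ≤ N → ∃ V, ∀ t, 0 ≤ t → |v i t| ≤ V := by
    induction i with
    | zero => exact fun _ ↦ hlead
    | succ n ih =>
      intro hn
      obtain ⟨_, hV⟩ := ih (Nat.le_of_succ_le hn)
      obtain ⟨-, -, C, hC⟩ := follower n.succ_pos hn hV
      exact ⟨C, fun t ht ↦ (hC t ht).1⟩
  choose! V hV using speed
  have confined (i : ℕ) (hi : 1 ≤ i) (hiN : i ≤ N) := follower hi hiN (hV (i - 1) (by lia))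
  choose! hdist hbearing C hC using confined
  choose! ξd_lo ξd_hi hξd hd_mem using hdist
  choose! ξβ_lo ξβ_hi hξβ hβ_mem using hbearing
  obtain ⟨M, hM⟩ := ((finite_Icc 1 N).image C).bddAbove
  refine ⟨ξd_lo, ξd_hi, ξβ_lo, ξβ_hi, fun i hi hiN ↦ ⟨hξd i hi hiN, hξβ i hi hiN,
    fun t ht ↦ ⟨hd_mem i hi hiN t ht, hβ_mem i hi hiN t ht⟩⟩,
    max M 1, lt_max_of_lt_right one_pos, fun i hi hiN t ht ↦ ?_⟩
  have hCM : C i ≤ max M 1 := le_max_of_le_left (hM (mem_image_of_mem C ⟨hi, hiN⟩))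
  exact (hC i hi hiN t ht).imp hCM.trans' hCM.trans'

/-- under the hypotheses of the platoon prescribed-performance
theorem, the normalized distance and bearing errors remain in compact
subintervals of (−M̲_{d_i}, M̄_{d_i}) and (−β_con, β_con) respectively, for
all t ≥ 0; consequently all control inputs v_i, ω_i are uniformly bounded. -/
theorem platoon_normalized_errors_compact_and_bounded_inputs
    (N : ℕ) (hN : 1 ≤ N)
    (d_col d_con β_con ρd_inf ρβ_inf l_d l_β : ℝ)
    (d_des k_d k_β : ℕ → ℝ)
    (hd_col : 0 < d_col)
    (hd_des : ∀ i, 1 ≤ i → i ≤ N → d_col < d_des i ∧ d_des i < d_con)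
    (hβ_con : 0 < β_con) (hβ_con' : β_con < Real.pi / 2)
    (hl_d : 0 < l_d) (hl_β : 0 < l_β)
    (hρd : 0 < ρd_inf)
    (hρd' : ∀ i, 1 ≤ i → i ≤ N → ρd_inf < max (d_des i - d_col) (d_con - d_des i))
    (hρβ : 0 < ρβ_inf) (hρβ' : ρβ_inf < β_con)
    (hk_d : ∀ i, 1 ≤ i → i ≤ N → 0 < k_d i)
    (hk_β : ∀ i, 1 ≤ i → i ≤ N → 0 < k_β i)
    (x y φ v ω : ℕ → ℝ → ℝ)
    (hx : ∀ i, i ≤ N → ∀ t : ℝ, 0 ≤ t →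
      HasDerivWithinAt (x i) (v i t * Real.cos (φ i t)) (Set.Ici (0 : ℝ)) t)
    (hy : ∀ i, i ≤ N → ∀ t : ℝ, 0 ≤ t →
      HasDerivWithinAt (y i) (v i t * Real.sin (φ i t)) (Set.Ici (0 : ℝ)) t)
    (hφ : ∀ i, i ≤ N → ∀ t : ℝ, 0 ≤ t →
      HasDerivWithinAt (φ i) (ω i t) (Set.Ici (0 : ℝ)) t)
    (hlead : ∃ C : ℝ, ∀ t : ℝ, 0 ≤ t → |v 0 t| ≤ C ∧ |ω 0 t| ≤ C)
    (d β : ℕ → ℝ → ℝ)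
    (hdiff : ∀ i, 1 ≤ i → i ≤ N → ∀ t : ℝ, 0 ≤ t →
      DifferentiableWithinAt ℝ (d i) (Set.Ici (0 : ℝ)) t ∧
      DifferentiableWithinAt ℝ (β i) (Set.Ici (0 : ℝ)) t)
    (hdpos : ∀ i, 1 ≤ i → i ≤ N → ∀ t : ℝ, 0 ≤ t → 0 < d i t)
    (hgx : ∀ i, 1 ≤ i → i ≤ N → ∀ t : ℝ, 0 ≤ t →
      x (i - 1) t - x i t = d i t * Real.cos (φ i t + β i t))
    (hgy : ∀ i, 1 ≤ i → i ≤ N → ∀ t : ℝ, 0 ≤ t →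
      y (i - 1) t - y i t = d i t * Real.sin (φ i t + β i t))
    (hv : ∀ i, 1 ≤ i → i ≤ N → ∀ t : ℝ, 0 ≤ t →
      v i t = k_d i * epsErr (d_des i - d_col) (d_con - d_des i)
        ((d i t - d_des i) /
          perfFn l_d ρd_inf (max (d_des i - d_col) (d_con - d_des i)) t))
    (hω : ∀ i, 1 ≤ i → i ≤ N → ∀ t : ℝ, 0 ≤ t →
      ω i t = (k_β i / perfFn l_β ρβ_inf β_con t) *
        gainFn β_con β_con (β i t / perfFn l_β ρβ_inf β_con t) *
        epsErr β_con β_con (β i t / perfFn l_β ρβ_inf β_con t))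
    (hinit : ∀ i, 1 ≤ i → i ≤ N →
      (d_col < d i 0 ∧ d i 0 < d_con) ∧ |β i 0| < β_con)
    :
    ∃ ξd_lo ξd_hi ξβ_lo ξβ_hi : ℕ → ℝ,
      (∀ i, 1 ≤ i → i ≤ N →
        (-(d_des i - d_col) < ξd_lo i ∧ ξd_lo i ≤ ξd_hi i ∧
          ξd_hi i < d_con - d_des i) ∧
        (-β_con < ξβ_lo i ∧ ξβ_lo i ≤ ξβ_hi i ∧ ξβ_hi i < β_con) ∧
        (∀ t : ℝ, 0 ≤ t →
          (ξd_lo i ≤ (d i t - d_des i) /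
              perfFn l_d ρd_inf (max (d_des i - d_col) (d_con - d_des i)) t ∧
            (d i t - d_des i) /
              perfFn l_d ρd_inf (max (d_des i - d_col) (d_con - d_des i)) t ≤
              ξd_hi i) ∧
          (ξβ_lo i ≤ β i t / perfFn l_β ρβ_inf β_con t ∧
            β i t / perfFn l_β ρβ_inf β_con t ≤ ξβ_hi i))) ∧
      ∃ C : ℝ, 0 < C ∧ ∀ i, 1 ≤ i → i ≤ N → ∀ t : ℝ, 0 ≤ t →
        |v i t| ≤ C ∧ |ω i t| ≤ C :=
  platoon_normalized_errors_compact_and_bounded_inputs_general hd_col hd_des hβ_con' hl_d.le hl_β.le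
    hρd (fun i hi hiN ↦ (hρd' i hi hiN).le) hρβ hρβ'.le hk_d hk_β hx hy (fun i _ ↦ hφ i)
    (hlead.imp fun _ h t ht ↦ (h t ht).1) hdiff hdpos hgx hgy hv hω hinit
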